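/- Let q ∈ ℂ with 0 < |q| < 1 and let x, y, z ∈ ℂ with y ≠ 0, and x ≠ q^{-m}, z ≠ q^{-m} for every m ∈ ℕ (so that (x;q)_n ≠ 0 and (z;q)_n ≠ 0 for all n). Assume both series below converge absolutely. Then ∑_{n≥0} (z/y;q)_n (-1)^n q^{n(n-1)/2} x^n / ((q;q)_n (z;q)_n) = (x;q)_∞ · ∑_{n≥0} q^{n(n-1)} (y;q)_n (xz/y)^n / ((q;q)_n (x;q)_n (z;q)_n). -/

import Mathlib

/-- The finite q-shifted factorial `(a;q)_n = ∏_{k=0}^{n-1} (1 - a q^k)`. -/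
noncomputable def qPoch (a q : ℂ) (n : ℕ) : ℂ := ∏ k ∈ Finset.range n, (1 - a * q ^ k)

/-- The infinite q-shifted factorial `(a;q)_∞ = ∏_{k=0}^{∞} (1 - a q^k)`. -/
noncomputable def qPochInf (a q : ℂ) : ℂ := ∏' k : ℕ, (1 - a * q ^ k)

open Filter Topology

namespace QAux

noncomputable def G (q : ℂ) : ℕ → ℕ → ℂ
  | _, 0 => 1
  | 0, _ + 1 => 0
  | N + 1, n + 1 => G q N (n + 1) + q ^ (N - n) * G q N n

lemma G_zero (q : ℂ) (N : ℕ) : G q N 0 = 1 := by cases N <;> rfl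

lemma G_succ (q : ℂ) (N n : ℕ) :
    G q (N + 1) (n + 1) = G q N (n + 1) + q ^ (N - n) * G q N n := rfl

lemma G_gt (q : ℂ) (N : ℕ) : ∀ n, N < n → G q N n = 0 := by
  induction N with
  | zero => intro n hn; cases n with
    | zero => omega
    | succ n => rfl
  | succ N ih => intro n hn; cases n with
    | zero => omega
    | succ n => rw [G_succ, ih _ (by omega), ih _ (by omega)]; simp

lemma P_zero (a q : ℂ) : qPoch a q 0 = 1 := by simp [qPoch]

lemma P_succ (a q : ℂ) (n : ℕ) : qPoch a q (n + 1) = qPoch a q n * (1 - a * q ^ n) := by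
  simp [qPoch, Finset.prod_range_succ]

lemma P_succ_left (a q : ℂ) (n : ℕ) : qPoch a q (n + 1) = (1 - a) * qPoch (a * q) q n := by
  simp only [qPoch, Finset.prod_range_succ', pow_zero, mul_one]
  rw [mul_comm]
  congr 1
  apply Finset.prod_congr rfl
  intro k _
  ring

lemma G_fact (q : ℂ) (N : ℕ) : ∀ n m, n + m = N →
    G q (n + m) n * qPoch q q n * qPoch q q m = qPoch q q (n + m) := by
  induction N with
  | zero =>
    intro n m h
    obtain rfl : n = 0 := by omega
    obtain rfl : m = 0 := by omega
    simp [G_zero, P_zero]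
  | succ N ih =>
    intro n m h
    rcases n with _ | n
    · simp [G_zero, P_zero]
    rcases m with _ | m
    · have h1 := ih n 0 (by omega)
      simp only [add_zero] at h1 ⊢
      rw [G_succ, G_gt q n (n + 1) (by omega), P_succ]
      simp only [P_zero, Nat.sub_self] at h1 ⊢
      linear_combination (1 - q * q ^ n) * h1
    · have h1 := ih (n + 1) m (by omega)
      have h2 := ih n (m + 1) (by omega)
      rw [show n + 1 + (m + 1) = (n + m + 1) + 1 by ring, G_succ, P_succ q q (n + m + 1),
        show n + m + 1 - n = m + 1 by omega]
      rw [show n + 1 + m = n + m + 1 by ring] at h1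
      rw [show n + (m + 1) = n + m + 1 by ring] at h2
      rw [P_succ q q m] at h2 ⊢
      rw [P_succ q q n] at h1 ⊢
      linear_combination (1 - q * q ^ m) * h1 + q ^ (m + 1) * (1 - q * q ^ n) * h2

lemma P_ne {z q : ℂ} (h : ∀ k : ℕ, 1 - z * q ^ k ≠ 0) (n : ℕ) : qPoch z q n ≠ 0 :=
  Finset.prod_ne_zero_iff.mpr fun k _ => h k

lemma choose2 (n : ℕ) : (n + 1).choose 2 = n.choose 2 + n := by
  rw [Nat.choose_succ_succ' n 1]; simp; ring

lemma chu (q w : ℂ) (N : ℕ) : ∀ y : ℂ, (∀ k : ℕ, 1 - w * y * q ^ k ≠ 0) →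
    ∑ n ∈ Finset.range (N + 1), G q N n * (-1) ^ n * q ^ (n.choose 2) * qPoch y q n * w ^ n
      / qPoch (w * y) q n = qPoch w q N / qPoch (w * y) q N := by
  induction N with
  | zero => intro y h; simp [G_zero, P_zero]
  | succ N ih =>
    intro y h
    have h' : ∀ k : ℕ, 1 - w * (y * q) * q ^ k ≠ 0 := by
      intro k; convert h (k + 1) using 2; ring
    have e1 := ih y h
    have e2 := ih (y * q) h'
    have hz0 : 1 - w * y ≠ 0 := by simpa using h 0
    rw [Finset.sum_range_succ']
    have key : ∀ n ∈ Finset.range (N + 1),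
        G q (N + 1) (n + 1) * (-1) ^ (n + 1) * q ^ ((n + 1).choose 2) * qPoch y q (n + 1)
          * w ^ (n + 1) / qPoch (w * y) q (n + 1)
        = G q N (n + 1) * (-1) ^ (n + 1) * q ^ ((n + 1).choose 2) * qPoch y q (n + 1)
          * w ^ (n + 1) / qPoch (w * y) q (n + 1)
        + (-(q ^ N * w * (1 - y) / (1 - w * y))) *
          (G q N n * (-1) ^ n * q ^ (n.choose 2) * qPoch (y * q) q n * w ^ n
            / qPoch (w * (y * q)) q n) := by
      intro n hn
      have hn' : n ≤ N := by simpa [Nat.lt_succ_iff] using hn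
      have hp := P_ne h' n
      rw [G_succ, P_succ_left y, P_succ_left (w * y), mul_assoc w y q, choose2]
      have : q ^ N = q ^ (N - n) * q ^ n := by rw [← pow_add]; congr 1; omega
      rw [this]
      field_simp
      ring
    rw [Finset.sum_congr rfl key, Finset.sum_add_distrib, ← Finset.mul_sum, e2]
    rw [Finset.sum_range_succ'] at e1
    rw [Finset.sum_range_succ, G_gt q N (N + 1) (by omega)]
    simp only [G_zero] at e1 ⊢
    have e3 : qPoch (w * y) q N * (1 - w * y * q ^ N)
        = (1 - w * y) * qPoch (w * (y * q)) q N := by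
      rw [← P_succ, P_succ_left, mul_assoc w y q]
    have hp := P_ne h' N
    have hp2 := P_ne h N
    have hN := h N
    have e4 : qPoch w q N / qPoch (w * y) q N
        + -(q ^ N * w * (1 - y) / (1 - w * y)) * (qPoch w q N / qPoch (w * (y * q)) q N)
        = qPoch w q (N + 1) / qPoch (w * y) q (N + 1) := by
      have : -(q ^ N * w * (1 - y) / (1 - w * y)) * (qPoch w q N / qPoch (w * (y * q)) q N)
        = -(q ^ N * w * (1 - y)) * qPoch w q N / (qPoch (w * y) q N * (1 - w * y * q ^ N)) := by
        rw [e3]; field_simp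
      rw [this, P_succ, P_succ]
      field_simp
      ring
    rw [← e4]
    linear_combination e1

section
variable {q : ℂ}

lemma q_ne (hq1 : ‖q‖ < 1) (k : ℕ) : 1 - q * q ^ k ≠ 0 := by
  intro h
  have h1 : q ^ (k + 1) = 1 := by rw [pow_succ']; linear_combination -h
  have h2 : ‖q‖ ^ (k + 1) = 1 := by rw [← norm_pow, h1, norm_one]
  have h3 := pow_lt_one₀ (norm_nonneg q) hq1 (Nat.succ_ne_zero k)
  exact absurd h2 h3.ne

noncomputable def E (q x : ℂ) (m : ℕ) : ℂ := (-1) ^ m * q ^ (m.choose 2) * x ^ m / qPoch q q m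

lemma E_succ (hq1 : ‖q‖ < 1) (x : ℂ) (m : ℕ) :
    E q x (m + 1) = (-(q ^ m * x) / (1 - q * q ^ m)) * E q x m := by
  have := P_ne (q_ne hq1) m
  have := q_ne hq1 m
  rw [E, E, P_succ, choose2]
  field_simp
  ring

lemma E_summable (hq1 : ‖q‖ < 1) (x : ℂ) : Summable (fun m => ‖E q x m‖) := by
  have ht : Tendsto (fun m : ℕ => q ^ m) atTop (𝓝 0) := tendsto_pow_atTop_nhds_zero_of_norm_lt_one hq1
  have h2 : Tendsto (fun m : ℕ => ‖-(q ^ m * x) / (1 - q * q ^ m)‖) atTop (𝓝 0) := by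
    have : Tendsto (fun m : ℕ => -(q ^ m * x) / (1 - q * q ^ m)) atTop
        (𝓝 (-(0 * x) / (1 - q * 0))) :=
      ((ht.mul_const x).neg).div (tendsto_const_nhds.sub (ht.const_mul q)) (by simp)
    simpa using this.norm
  refine summable_of_ratio_norm_eventually_le (r := 1 / 2) (by norm_num) ?_
  filter_upwards [h2.eventually_le_const (show (0 : ℝ) < 1 / 2 by norm_num)] with m hm
  rw [norm_norm, norm_norm, E_succ hq1, norm_mul]
  gcongr

lemma E_func (hq1 : ‖q‖ < 1) (x : ℂ) : ∑' m, E q x m = (1 - x) * ∑' m, E q (x * q) m := by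
  have s1 := (E_summable hq1 x).of_norm
  have s2 := (E_summable hq1 (x * q)).of_norm
  have : ∀ m, E q x (m + 1) - E q (x * q) (m + 1) = -x * E q (x * q) m := by
    intro m
    have := P_ne (q_ne hq1) m
    have := q_ne hq1 m
    rw [E, E, E, P_succ, choose2]
    field_simp
    ring
  have h3 : ∑' m, (E q x m - E q (x * q) m) = -x * ∑' m, E q (x * q) m := by
    rw [(s1.sub s2).tsum_eq_zero_add, tsum_congr this, tsum_mul_left]
    simp [E]
  rw [s1.tsum_sub s2] at h3
  linear_combination h3

lemma E_iter (hq1 : ‖q‖ < 1) (x : ℂ) (n : ℕ) :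
    ∑' m, E q x m = qPoch x q n * ∑' m, E q (x * q ^ n) m := by
  induction n with
  | zero => simp [P_zero]
  | succ n ih => rw [ih, E_func hq1 (x * q ^ n), P_succ, pow_succ]; ring_nf

lemma P_tendsto (hq1 : ‖q‖ < 1) (x : ℂ) :
    Tendsto (fun n => qPoch x q n) atTop (𝓝 (qPochInf x q)) := by
  have hs : Summable (fun k : ℕ => ‖-(x * q ^ k)‖) := by
    simp only [norm_neg, norm_mul, norm_pow]
    exact (summable_geometric_of_lt_one (norm_nonneg q) hq1).mul_left _
  have hm : Multipliable (fun k : ℕ => 1 - x * q ^ k) := by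
    simpa [sub_eq_add_neg] using multipliable_one_add_of_summable hs
  exact hm.hasProd.tendsto_prod_nat

lemma E_norm_le (hq1 : ‖q‖ < 1) (x : ℂ) (n m : ℕ) : ‖E q (x * q ^ n) m‖ ≤ ‖E q x m‖ := by
  have : E q (x * q ^ n) m = E q x m * (q ^ n) ^ m := by
    rw [E, E, mul_pow]; ring
  rw [this, norm_mul, norm_pow, norm_pow]
  exact mul_le_of_le_one_right (norm_nonneg _)
    (pow_le_one₀ (by positivity) (pow_le_one₀ (norm_nonneg _) hq1.le))

lemma euler (hq1 : ‖q‖ < 1) (x : ℂ) : ∑' m, E q x m = qPochInf x q := by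
  have ht : Tendsto (fun n : ℕ => q ^ n) atTop (𝓝 0) := tendsto_pow_atTop_nhds_zero_of_norm_lt_one hq1
  have h1 : Tendsto (fun n : ℕ => ∑' m, E q (x * q ^ n) m) atTop (𝓝 (∑' m, E q 0 m)) := by
    refine tendsto_tsum_of_dominated_convergence (E_summable hq1 x) ?_ ?_
    · intro m
      have h : Tendsto (fun n : ℕ => x * q ^ n) atTop (𝓝 0) := by simpa using ht.const_mul x
      exact ((h.pow m).const_mul _).div_const _
    · exact Eventually.of_forall fun n m => E_norm_le hq1 x n m
  have h0 : ∑' m, E q 0 m = 1 := by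
    rw [tsum_eq_single 0]
    · simp [E, P_zero]
    · intro m hm; simp [E, hm]
  rw [h0] at h1
  have h2 := (P_tendsto hq1 x).mul h1
  rw [mul_one] at h2
  refine tendsto_nhds_unique ?_ h2
  refine tendsto_const_nhds.congr fun n => E_iter hq1 x n

end

lemma ne_of (q : ℂ) (hq0 : 0 < ‖q‖) (x : ℂ) (hx : ∀ m : ℕ, x ≠ q ^ (-(m : ℤ))) (k : ℕ) :
    1 - x * q ^ k ≠ 0 := by
  intro h
  have hq : q ≠ 0 := norm_pos_iff.mp hq0
  apply hx k
  rw [zpow_neg, zpow_natCast]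
  exact eq_inv_of_mul_eq_one_left (by linear_combination -h)

lemma exps (n m : ℕ) : n * (n - 1) + m.choose 2 + n * m = n.choose 2 + (n + m).choose 2 := by
  have h : n * (n - 1) = 2 * n.choose 2 := by
    rw [Nat.choose_two_right, Nat.mul_div_cancel' (Nat.even_mul_pred_self n).two_dvd]
  rw [h]
  induction m with
  | zero => simp; ring
  | succ m ih => rw [← add_assoc, choose2, choose2]; linarith

end QAux

open QAux in
theorem stmt16 (q : ℂ) (hq0 : 0 < ‖q‖) (hq1 : ‖q‖ < 1)
    (x y z : ℂ) (hy : y ≠ 0)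
    (hx : ∀ m : ℕ, x ≠ q ^ (-(m : ℤ))) (hz : ∀ m : ℕ, z ≠ q ^ (-(m : ℤ)))
    (h1 : Summable (fun n : ℕ => ‖qPoch (z / y) q n * (-1 : ℂ) ^ n *
      q ^ (n * (n - 1) / 2) * x ^ n / (qPoch q q n * qPoch z q n)‖))
    (h2 : Summable (fun n : ℕ => ‖q ^ (n * (n - 1)) * qPoch y q n *
      (x * z / y) ^ n / (qPoch q q n * qPoch x q n * qPoch z q n)‖)) :
    ∑' n : ℕ, qPoch (z / y) q n * (-1 : ℂ) ^ n *
      q ^ (n * (n - 1) / 2) * x ^ n / (qPoch q q n * qPoch z q n)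
    = qPochInf x q * ∑' n : ℕ, q ^ (n * (n - 1)) * qPoch y q n *
      (x * z / y) ^ n / (qPoch q q n * qPoch x q n * qPoch z q n) := by
  have hx' := ne_of q hq0 x hx
  have hz' := ne_of q hq0 z hz
  obtain ⟨w, rfl⟩ : ∃ w, z = w * y := ⟨z / y, by field_simp⟩
  have hw : w * y / y = w := by field_simp
  have hw2 : x * (w * y) / y = x * w := by field_simp
  simp only [hw, hw2] at h2 ⊢
  set a : ℕ → ℂ := fun n => q ^ (n * (n - 1)) * qPoch y q n * (x * w) ^ n
    / (qPoch q q n * qPoch (w * y) q n) with ha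
  have hab : ∀ n, q ^ (n * (n - 1)) * qPoch y q n * (x * w) ^ n
      / (qPoch q q n * qPoch x q n * qPoch (w * y) q n) = a n / qPoch x q n := by
    intro n; simp only [ha]; rw [div_div]; congr 1; ring
  simp only [hab] at h2 ⊢
  -- summability of a
  obtain ⟨C, hC⟩ : ∃ C, ∀ n, ‖qPoch x q n‖ ≤ C := by
    obtain ⟨C, hC⟩ := (Metric.isBounded_range_of_tendsto _ (P_tendsto hq1 x)).exists_norm_le
    exact ⟨C, fun n => hC _ ⟨n, rfl⟩⟩
  have hsa : Summable (fun n => ‖a n‖) := by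
    refine Summable.of_nonneg_of_le (fun n => norm_nonneg _) (fun n => ?_) (h2.mul_left C)
    have : a n = qPoch x q n * (a n / qPoch x q n) := by
      have := P_ne hx' n
      field_simp
    calc ‖a n‖ = ‖qPoch x q n‖ * ‖a n / qPoch x q n‖ := by rw [← norm_mul, ← this]
      _ ≤ _ := mul_le_mul_of_nonneg_right (hC n) (norm_nonneg _)
  have hF : Summable (fun p : ℕ × ℕ => a p.1 * E q (x * q ^ p.1) p.2) := by
    refine Summable.of_norm_bounded
      (hsa.mul_of_nonneg (E_summable hq1 x) (fun _ => norm_nonneg _) (fun _ => norm_nonneg _)) ?_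
    intro p
    rw [norm_mul]
    gcongr
    exact E_norm_le hq1 x p.1 p.2
  have hR : qPochInf x q * ∑' n, a n / qPoch x q n
      = ∑' p : ℕ × ℕ, a p.1 * E q (x * q ^ p.1) p.2 := by
    rw [hF.tsum_prod, ← tsum_mul_left]
    refine tsum_congr fun n => ?_
    dsimp only
    rw [tsum_mul_left, ← euler hq1 x, E_iter hq1 x n]
    have := P_ne hx' n
    field_simp
  rw [hR, ← Finset.HasAntidiagonal.sigmaAntidiagonalEquivProd.tsum_eq]
  have hF' := (Finset.HasAntidiagonal.sigmaAntidiagonalEquivProd.summable_iff).mpr hF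
  refine Eq.trans ?_ (Summable.tsum_sigma' (fun N => (hasSum_fintype _).summable) hF').symm
  refine tsum_congr fun N => ?_
  rw [tsum_fintype]
  simp only [Function.comp_apply, Finset.HasAntidiagonal.sigmaAntidiagonalEquivProd_apply]
  rw [Finset.sum_coe_sort (Finset.HasAntidiagonal.antidiagonal N) (fun p => a p.1 * E q (x * q ^ p.1) p.2),
    Finset.Nat.sum_antidiagonal_eq_sum_range_succ (fun i j => a i * E q (x * q ^ i) j)]
  have hc := chu q w N y hz'
  have hqN := P_ne (q_ne hq1) N
  have : qPoch w q N * (-1 : ℂ) ^ N * q ^ (N * (N - 1) / 2) * x ^ N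
      / (qPoch q q N * qPoch (w * y) q N)
      = ((-1) ^ N * q ^ (N.choose 2) * x ^ N / qPoch q q N)
        * (qPoch w q N / qPoch (w * y) q N) := by
    rw [Nat.choose_two_right, div_mul_div_comm]; congr 1; ring
  rw [this, ← hc, Finset.mul_sum]
  refine Finset.sum_congr rfl fun n hn => ?_
  obtain ⟨m, rfl⟩ : ∃ m, N = n + m := ⟨N - n, by simp at hn; omega⟩
  rw [Nat.add_sub_cancel_left]
  have hg := G_fact q (n + m) n m rfl
  have hqn := P_ne (q_ne hq1) n
  have hqm := P_ne (q_ne hq1) m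
  have hzn := P_ne hz' n
  have hG : G q (n + m) n = qPoch q q (n + m) / (qPoch q q n * qPoch q q m) := by
    rw [eq_div_iff (mul_ne_zero hqn hqm), ← hg]; ring
  have he : q ^ (n * (n - 1)) * q ^ (m.choose 2) * q ^ (n * m)
      = q ^ (n.choose 2) * q ^ ((n + m).choose 2) := by
    rw [← pow_add, ← pow_add, ← pow_add, exps]
  have hs : (-1 : ℂ) ^ n * (-1) ^ n = 1 := by rw [← mul_pow]; simp
  rw [hG]
  simp only [ha, E]
  rw [mul_pow x (q ^ n) m, ← pow_mul q n m, mul_pow x w n, pow_add x, pow_add (-1 : ℂ)]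
  generalize q ^ (n * (n - 1)) = A at *
  generalize q ^ (m.choose 2) = B at *
  generalize q ^ (n * m) = D at *
  generalize q ^ (n.choose 2) = F at *
  generalize q ^ ((n + m).choose 2) = H at *
  generalize (-1 : ℂ) ^ n = s at *
  generalize (-1 : ℂ) ^ m = t at *
  field_simp
  linear_combination (x ^ n * x ^ m * qPoch y q n * w ^ n) * ((t * F * H) * hs - t * he)
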